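/- Let s = 1, k ≥ 1, m = 2k+1, I = [−1,1], and let b_1,…,b_k be pairwise distinct reals with b_i ∉ [−1,1]. For each i let τ_i be the solution of 2b_i = τ_i + 1/τ_i with 0 < |τ_i| < 1, and define d_0,…,d_{4k} by ∏_{i=1}^k (t−τ_i)^4 = Σ_{i=0}^{4k} d_i t^i. Then the Chebyshev points s_1 < ⋯ < s_m of the system 1, 1/(t−b_1), 1/(t−b_1)², …, 1/(t−b_k), 1/(t−b_k)² on [−1,1] are exactly the zeros in [−1,1] of the function t ↦ (1−t²) Σ_{i=0}^{4k} d_i U_{i−2k−1}(t), where U_n denotes the n-th Chebyshev polynomial of the second kind, extended to negative indices by U_{−1} = 0 and U_{−n} = −U_{n−2}. -/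

import Mathlib

open Matrix Finset Polynomial

noncomputable def fRat (s k : ℕ) (b : Fin k → ℝ) (i : Fin (s + 2 * k)) (t : ℝ) : ℝ :=
  if hi : i.val < s then t ^ i.val
  else
    let q : Fin k := ⟨(i.val - s) / 2, by have := i.isLt; omega⟩
    if (i.val - s) % 2 = 0 then (t - b q)⁻¹ else ((t - b q) ^ 2)⁻¹


lemma aux_ivt (F : ℝ → ℝ) (p : ℝ) (hp : 0 < p) (n : ℕ) : ∀ a b : ℝ, a ≤ b →
    ContinuousOn F (Set.Icc a b) → F a = 0 → F b = n * p →
    ∃ x : ℕ → ℝ, (∀ j ≤ n, x j ∈ Set.Icc a b ∧ F (x j) = j * p) ∧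
      ∀ i j, i < j → j ≤ n → x i < x j := by
  induction n with
  | zero =>
    intro a b hab _ ha _
    refine ⟨fun _ => a, ?_, ?_⟩
    · intro j hj
      obtain rfl : j = 0 := by omega
      simp [ha, hab]
    · intro i j h1 h2; omega
  | succ n ih =>
    intro a b hab hc ha hb
    have hmem : (n : ℝ) * p ∈ Set.Icc (F a) (F b) := by
      rw [ha, hb]; constructor
      · positivity
      · push_cast; nlinarith
    obtain ⟨b', hb', hF⟩ := intermediate_value_Icc hab hc hmem
    have hlt : b' < b := by
      rcases lt_or_eq_of_le hb'.2 with h | h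
      · exact h
      · subst h; rw [hF] at hb; push_cast at hb; nlinarith
    obtain ⟨x, hx1, hx2⟩ := ih a b' hb'.1 (hc.mono (Set.Icc_subset_Icc_right hb'.2)) ha hF
    refine ⟨fun j => if j ≤ n then x j else b, ?_, ?_⟩
    · intro j hj
      by_cases h : j ≤ n
      · simp only [h, if_true]
        exact ⟨⟨(hx1 j h).1.1, (hx1 j h).1.2.trans hb'.2⟩, (hx1 j h).2⟩
      · obtain rfl : j = n + 1 := by omega
        simp only [h, if_false]
        exact ⟨⟨hab, le_refl _⟩, hb⟩
    · intro i j hij hj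
      have hi : i ≤ n := by omega
      by_cases h : j ≤ n
      · simp only [h, hi, if_true]; exact hx2 i j hij h
      · simp only [h, hi, if_true, if_false]
        exact lt_of_le_of_lt (hx1 i hi).1.2 hlt

lemma aux_sign (m : ℕ) (s : Fin m → ℝ) (hs : StrictMono s) (j : Fin m) :
    0 < (-1 : ℝ) ^ (m - 1 - j.val) * ∏ i ∈ univ.erase j, (s j - s i) := by
  have hsplit : (univ.erase j : Finset (Fin m)) = Finset.Iio j ∪ Finset.Ioi j := by
    ext i; simp [lt_or_lt_iff_ne]
  have hdisj : Disjoint (Finset.Iio j) (Finset.Ioi j) := by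
    rw [Finset.disjoint_left]; intro i h1 h2; simp at h1 h2; exact absurd (h1.trans h2) (lt_irrefl _)
  rw [hsplit, Finset.prod_union hdisj]
  have h1 : 0 < ∏ i ∈ Finset.Iio j, (s j - s i) :=
    Finset.prod_pos fun i hi => sub_pos.2 (hs (by simpa using hi))
  have h2 : 0 < ∏ i ∈ Finset.Ioi j, ((-1) * (s j - s i)) :=
    Finset.prod_pos fun i hi => by have := hs (show j < i by simpa using hi); linarith
  rw [Finset.prod_mul_distrib, Finset.prod_const, Fin.card_Ioi] at h2
  have := mul_pos h1 h2
  linarith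

/-- extremality of the top coefficient -/
lemma aux_key (m : ℕ) (s : Fin m → ℝ) (hs : StrictMono s) (D : ℝ → ℝ) (p q : ℝ[X])
    (hp : p.degree < m) (hq : q.degree < m) (ε : ℝ) (hε : |ε| = 1)
    (hD : ∀ j, 0 < D (s j)) (hps : ∀ j, p.eval (s j) = ε * (-1) ^ j.val * D (s j))
    (hqs : ∀ j, |q.eval (s j)| ≤ D (s j)) :
    |q.coeff (m - 1)| ≤ |p.coeff (m - 1)| ∧
    (|p.coeff (m - 1)| ≤ |q.coeff (m - 1)| → ∀ j, |q.eval (s j)| = D (s j)) := by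
  set w : Fin m → ℝ := fun j => ∏ i ∈ univ.erase j, (s j - s i) with hw
  have hc : ∀ r : ℝ[X], r.degree < m → r.coeff (m - 1) = ∑ j, r.eval (s j) / w j := by
    intro r hr
    have := Lagrange.coeff_eq_sum (s := (univ : Finset (Fin m))) (v := s) hs.injective.injOn (P := r)
      (by simpa using hr)
    simpa using this
  have hw0 : ∀ j, 0 < |w j| := by
    intro j
    rw [abs_pos]; intro h
    have := aux_sign m s hs j
    simp only [hw] at h
    rw [h] at this; simp at this
  have hwa : ∀ j, (-1 : ℝ) ^ j.val / w j = (-1) ^ (m - 1) / |w j| := by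
    intro j
    have h1 := aux_sign m s hs j
    have h2 : |w j| = (-1 : ℝ) ^ (m - 1 - j.val) * w j := by
      rw [← abs_of_pos h1, abs_mul]; simp [hw]
    have h3 : (-1 : ℝ) ^ (m - 1) = (-1) ^ (m - 1 - j.val) * (-1) ^ j.val := by
      rw [← pow_add]; congr 1; have := j.isLt; omega
    rw [h2, h3, mul_div_mul_left _ _ (by simp)]
  have hpc : |p.coeff (m - 1)| = ∑ j, D (s j) / |w j| := by
    have : p.coeff (m - 1) = ε * (-1) ^ (m - 1) * ∑ j, D (s j) / |w j| := by
      rw [hc p hp, Finset.mul_sum]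
      refine Finset.sum_congr rfl fun j _ => ?_
      rw [hps j]
      calc ε * (-1) ^ j.val * D (s j) / w j = ε * D (s j) * ((-1) ^ j.val / w j) := by ring
        _ = _ := by rw [hwa j]; ring
    rw [this, abs_mul, abs_mul, hε]
    simp only [abs_pow, abs_neg, abs_one, one_pow, one_mul]
    exact abs_of_nonneg (Finset.sum_nonneg fun j _ => (div_pos (hD j) (hw0 j)).le)
  have hqc : |q.coeff (m - 1)| ≤ ∑ j, |q.eval (s j)| / |w j| := by
    rw [hc q hq]
    refine (Finset.abs_sum_le_sum_abs _ _).trans (le_of_eq ?_)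
    exact Finset.sum_congr rfl fun j _ => abs_div _ _
  have hle : ∀ j ∈ (univ : Finset (Fin m)), |q.eval (s j)| / |w j| ≤ D (s j) / |w j| :=
    fun j _ => div_le_div_of_nonneg_right (hqs j) (hw0 j).le
  refine ⟨by rw [hpc]; exact hqc.trans (Finset.sum_le_sum hle), ?_⟩
  intro h j
  rw [hpc] at h
  have heq := (Finset.sum_eq_sum_iff_of_le hle).1 (le_antisymm (Finset.sum_le_sum hle) (h.trans hqc)) j (mem_univ j)
  exact (div_left_inj' (hw0 j).ne').1 heq

/-- half-angle factor -/
noncomputable def auxW (τ ψ : ℝ) : ℂ := Complex.exp (ψ * Complex.I) - τ * Complex.exp (-(ψ * Complex.I))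

lemma auxW_eq (τ ψ : ℝ) : auxW τ ψ = ((1 - τ) * Real.cos ψ : ℝ) + ((1 + τ) * Real.sin ψ : ℝ) * Complex.I := by
  unfold auxW
  rw [← neg_mul, Complex.exp_mul_I, Complex.exp_mul_I]
  push_cast
  rw [Complex.cos_neg, Complex.sin_neg]
  ring

lemma auxW_norm (τ ψ : ℝ) : ‖auxW τ ψ‖ ^ 2 = 1 + τ ^ 2 - 2 * τ * Real.cos (2 * ψ) := by
  rw [auxW_eq, Complex.sq_norm, Complex.normSq_add_mul_I, Real.cos_two_mul]
  have := Real.sin_sq_add_cos_sq ψ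
  linear_combination (1 + τ) ^ 2 * this

lemma auxW_four (τ ψ : ℝ) : auxW τ ψ ^ 4 =
    (((1 + τ ^ 2 - 2 * τ * Real.cos (2 * ψ)) ^ 2 : ℝ) : ℂ) *
      Complex.exp ((4 * Complex.arg (auxW τ ψ) : ℝ) * Complex.I) := by
  conv_lhs => rw [← Complex.norm_mul_exp_arg_mul_I (auxW τ ψ)]
  rw [← auxW_norm, mul_pow, ← Complex.exp_nat_mul]
  push_cast
  congr 1
  · ring
  · ring_nf

noncomputable def auxD (k : ℕ) (τ : Fin k → ℝ) (t : ℝ) : ℝ := ∏ i, (1 + τ i ^ 2 - 2 * τ i * t) ^ 2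

noncomputable def auxPhi (k : ℕ) (τ : Fin k → ℝ) (ψ : ℝ) : ℝ := ∑ i, 4 * Complex.arg (auxW (τ i) ψ)

lemma auxW_prod (k : ℕ) (τ : Fin k → ℝ) (ψ : ℝ) : ∏ i, auxW (τ i) ψ ^ 4 =
    (auxD k τ (Real.cos (2 * ψ)) : ℂ) * Complex.exp ((auxPhi k τ ψ : ℝ) * Complex.I) := by
  simp only [auxW_four, auxD, auxPhi, Finset.prod_mul_distrib]
  push_cast
  rw [Finset.sum_mul, Complex.exp_sum]

noncomputable def auxA (k : ℕ) (P : ℝ[X]) : ℝ[X] :=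
  ∑ i ∈ range (4 * k + 1), Polynomial.C (P.coeff i) * Chebyshev.T ℝ ((i : ℤ) - 2 * (k : ℤ))

noncomputable def auxU (k : ℕ) (P : ℝ[X]) : ℝ[X] :=
  ∑ i ∈ range (4 * k + 1), Polynomial.C (P.coeff i) * Chebyshev.U ℝ ((i : ℤ) - 2 * (k : ℤ) - 1)

lemma aux_cplx (k : ℕ) (τ : Fin k → ℝ) (P : ℝ[X])
    (hP : P = ∏ i : Fin k, (Polynomial.X - Polynomial.C (τ i)) ^ 4) (ψ : ℝ) :
    (((auxA k P).eval (Real.cos (2 * ψ)) : ℝ) : ℂ) +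
      (((auxU k P).eval (Real.cos (2 * ψ)) * Real.sin (2 * ψ) : ℝ) : ℂ) * Complex.I
      = ∏ i, auxW (τ i) ψ ^ 4 := by
  have hdeg : P.natDegree < 4 * k + 1 := by
    rw [hP, natDegree_prod_of_monic _ _ (fun i _ => (monic_X_sub_C _).pow _)]
    simp [natDegree_pow]; omega
  have hA : (auxA k P).eval (Real.cos (2 * ψ)) =
      ∑ i ∈ range (4 * k + 1), P.coeff i * Real.cos ((((i : ℤ) - 2 * (k : ℤ) : ℤ) : ℝ) * (2 * ψ)) := by
    simp only [auxA, eval_finsetSum, eval_mul, eval_C, Chebyshev.T_real_cos]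
  have hU : (auxU k P).eval (Real.cos (2 * ψ)) * Real.sin (2 * ψ) =
      ∑ i ∈ range (4 * k + 1), P.coeff i * Real.sin ((((i : ℤ) - 2 * (k : ℤ) : ℤ) : ℝ) * (2 * ψ)) := by
    simp only [auxU, eval_finsetSum, eval_mul, eval_C, Finset.sum_mul, mul_assoc, Chebyshev.U_real_cos]
    refine Finset.sum_congr rfl fun i _ => ?_
    push_cast; ring_nf
  rw [hA, hU]
  have hE : ∀ i : ℕ, Complex.exp (-(ψ * Complex.I)) ^ (4 * k) * Complex.exp (ψ * Complex.I * 2) ^ i =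
      Complex.cos ((((i : ℤ) - 2 * (k : ℤ) : ℤ) : ℂ) * (2 * ψ)) +
      Complex.sin ((((i : ℤ) - 2 * (k : ℤ) : ℤ) : ℂ) * (2 * ψ)) * Complex.I := by
    intro i
    rw [← Complex.exp_mul_I, ← Complex.exp_nat_mul, ← Complex.exp_nat_mul, ← Complex.exp_add]
    congr 1; push_cast; ring
  have hPz : ∑ i ∈ range (4 * k + 1), (P.coeff i : ℂ) * Complex.exp (ψ * Complex.I * 2) ^ i =
      ∏ i, (Complex.exp (ψ * Complex.I * 2) - τ i) ^ 4 := by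
    have h1 := Polynomial.eval₂_eq_sum_range' (Complex.ofRealHom) hdeg (Complex.exp (ψ * Complex.I * 2))
    simp only [Complex.ofRealHom_eq_coe] at h1
    rw [← h1, hP, eval₂_finsetProd]
    simp [eval₂_pow, eval₂_sub]
  have hw : ∀ i, auxW (τ i) ψ ^ 4 = Complex.exp (-(ψ * Complex.I)) ^ 4 * (Complex.exp (ψ * Complex.I * 2) - τ i) ^ 4 := by
    intro i
    rw [← mul_pow, mul_sub, ← Complex.exp_add, auxW]
    ring_nf
  simp only [hw, Finset.prod_mul_distrib, Finset.prod_const, card_univ, Fintype.card_fin, ← hPz]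
  rw [← pow_mul, Finset.mul_sum]
  push_cast
  rw [Finset.sum_mul, ← Finset.sum_add_distrib]
  refine Finset.sum_congr rfl fun i _ => ?_
  have := hE i
  push_cast at this
  linear_combination (-(P.coeff i : ℂ)) * this

lemma aux_re (k : ℕ) (τ : Fin k → ℝ) (P : ℝ[X])
    (hP : P = ∏ i : Fin k, (Polynomial.X - Polynomial.C (τ i)) ^ 4) (ψ : ℝ) :
    (auxA k P).eval (Real.cos (2 * ψ)) = auxD k τ (Real.cos (2 * ψ)) * Real.cos (auxPhi k τ ψ) ∧
    (auxU k P).eval (Real.cos (2 * ψ)) * Real.sin (2 * ψ) =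
      auxD k τ (Real.cos (2 * ψ)) * Real.sin (auxPhi k τ ψ) := by
  have h := aux_cplx k τ P hP ψ
  rw [auxW_prod, Complex.exp_mul_I, ← Complex.ofReal_cos, ← Complex.ofReal_sin] at h
  generalize (auxA k P).eval (Real.cos (2 * ψ)) = a at *
  generalize (auxU k P).eval (Real.cos (2 * ψ)) * Real.sin (2 * ψ) = b at *
  generalize auxD k τ (Real.cos (2 * ψ)) = d at *
  generalize Real.cos (auxPhi k τ ψ) = e at *
  generalize Real.sin (auxPhi k τ ψ) = f at *
  constructor
  · simpa using congrArg Complex.re h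
  · simpa using congrArg Complex.im h

lemma aux_pell (k : ℕ) (τ : Fin k → ℝ) (P : ℝ[X])
    (hP : P = ∏ i : Fin k, (Polynomial.X - Polynomial.C (τ i)) ^ 4) (t : ℝ)
    (ht : t ∈ Set.Icc (-1 : ℝ) 1) :
    (auxA k P).eval t ^ 2 + (1 - t ^ 2) * (auxU k P).eval t ^ 2 = auxD k τ t ^ 2 := by
  obtain ⟨h1, h2⟩ := aux_re k τ P hP (Real.arccos t / 2)
  rw [mul_div_cancel₀ _ (two_ne_zero), Real.cos_arccos ht.1 ht.2] at h1 h2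
  have h3 : Real.sin (Real.arccos t) ^ 2 = 1 - t ^ 2 := by
    rw [Real.sin_sq, Real.cos_arccos ht.1 ht.2]
  have h4 := Real.sin_sq_add_cos_sq (auxPhi k τ (Real.arccos t / 2))
  rw [← h3, mul_comm (Real.sin _ ^ 2), ← mul_pow, h2, h1]
  linear_combination auxD k τ t ^ 2 * h4

lemma auxD_pos (k : ℕ) (τ : Fin k → ℝ) (hτ1 : ∀ i, |τ i| < 1) (t : ℝ) (ht : t ∈ Set.Icc (-1 : ℝ) 1) :
    0 < auxD k τ t := by
  refine Finset.prod_pos fun i _ => ?_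
  have h := abs_lt.1 (hτ1 i)
  have : 0 < 1 + τ i ^ 2 - 2 * τ i * t := by
    have h1 : 0 < (1 - τ i) ^ 2 := by have : 0 < 1 - τ i := by linarith [h.2]
                                      positivity
    have h2 : 0 < (1 + τ i) ^ 2 := by have : 0 < 1 + τ i := by linarith [h.1]
                                      positivity
    rcases le_total t 0 with h0 | h0
    · nlinarith [mul_nonneg (by linarith [ht.1] : 0 ≤ 1 + t) h1.le, mul_pos (by linarith : 0 < 1 - t) h2]
    · nlinarith [mul_nonneg (by linarith [ht.2] : 0 ≤ 1 - t) h2.le, mul_pos (by linarith : 0 < 1 + t) h1]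
  positivity

lemma aux_points (k : ℕ) (τ : Fin k → ℝ) (hτ1 : ∀ i, |τ i| < 1) (P : ℝ[X])
    (hP : P = ∏ i : Fin k, (Polynomial.X - Polynomial.C (τ i)) ^ 4) :
    ∃ s : Fin (1 + 2 * k) → ℝ, StrictMono s ∧ (∀ j, s j ∈ Set.Icc (-1 : ℝ) 1) ∧
      ∀ j, (auxA k P).eval (s j) = 1 * (-1) ^ j.val * auxD k τ (s j) := by
  have hcont : ContinuousOn (auxPhi k τ) (Set.Icc 0 (Real.pi / 2)) := by
    unfold auxPhi
    refine continuousOn_finsetSum _ fun i _ => ContinuousOn.mul continuousOn_const ?_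
    intro ψ hψ
    refine ContinuousAt.continuousWithinAt ?_
    have hc : ContinuousAt (auxW (τ i)) ψ := by
      have : Continuous (auxW (τ i)) := by unfold auxW; fun_prop
      exact this.continuousAt
    refine (Complex.continuousAt_arg ?_).comp hc
    rw [auxW_eq, Complex.mem_slitPlane_iff]
    have h := abs_lt.1 (hτ1 i)
    simp only [Complex.add_re, Complex.ofReal_re, Complex.re_ofReal_mul, Complex.I_re, Complex.add_im,
      Complex.ofReal_im, Complex.im_ofReal_mul, Complex.I_im, mul_zero, mul_one, zero_add, add_zero]
    rcases eq_or_lt_of_le hψ.2 with h2 | h2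
    · right; rw [h2, Real.sin_pi_div_two]; linarith [h.1]
    · left
      exact mul_pos (by linarith [h.2]) (Real.cos_pos_of_mem_Ioo ⟨by linarith [hψ.1, Real.pi_pos], h2⟩)
  have h0 : auxPhi k τ 0 = 0 := by
    unfold auxPhi
    refine Finset.sum_eq_zero fun i _ => ?_
    have h := abs_lt.1 (hτ1 i)
    rw [auxW_eq]
    simp only [Real.cos_zero, Real.sin_zero, mul_one, mul_zero, Complex.ofReal_zero, zero_mul, add_zero]
    rw [Complex.arg_ofReal_of_nonneg (by linarith [h.2]), mul_zero]
  have h1 : auxPhi k τ (Real.pi / 2) = (2 * k : ℕ) * Real.pi := by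
    unfold auxPhi
    have : ∀ i, 4 * Complex.arg (auxW (τ i) (Real.pi / 2)) = 2 * Real.pi := by
      intro i
      have h := abs_lt.1 (hτ1 i)
      rw [auxW_eq]
      simp only [Real.cos_pi_div_two, Real.sin_pi_div_two, mul_one, mul_zero, Complex.ofReal_zero, zero_add]
      rw [Complex.arg_real_mul _ (by linarith [h.1]), Complex.arg_I]; ring
    simp only [this, Finset.sum_const, card_univ, Fintype.card_fin, nsmul_eq_mul]
    push_cast; ring
  obtain ⟨x, hx1, hx2⟩ := aux_ivt (auxPhi k τ) Real.pi Real.pi_pos (2 * k) 0 (Real.pi / 2)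
    (by positivity) hcont h0 h1
  refine ⟨fun j => Real.cos (2 * x (2 * k - j.val)), ?_, ?_, ?_⟩
  · intro i j hij
    have hij' : i.val < j.val := hij
    have hj := j.isLt
    have hi1 := (hx1 (2 * k - i.val) (by omega)).1
    have hj1 := (hx1 (2 * k - j.val) (by omega)).1
    apply Real.strictAntiOn_cos
    · constructor <;> linarith [hj1.1, hj1.2]
    · constructor <;> linarith [hi1.1, hi1.2]
    · have := hx2 (2 * k - j.val) (2 * k - i.val) (by omega) (by omega)
      linarith
  · intro j; exact ⟨Real.neg_one_le_cos _, Real.cos_le_one _⟩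
  · intro j
    have hj := j.isLt
    simp only
    rw [(aux_re k τ P hP _).1, (hx1 _ (by omega : 2 * k - j.val ≤ 2 * k)).2, Real.cos_nat_mul_pi]
    have : (-1 : ℝ) ^ (2 * k - j.val) = (-1) ^ j.val := by
      rcases neg_one_pow_eq_or ℝ j.val with h | h
      all_goals
        have h2 : (-1 : ℝ) ^ (2 * k - j.val) * (-1) ^ j.val = 1 := by
          rw [← pow_add, Nat.sub_add_cancel (by omega), pow_mul]; simp
        rw [h] at h2 ⊢
        linarith
    rw [this]; ring

lemma auxA_deg (k : ℕ) (P : ℝ[X]) : (auxA k P).natDegree ≤ 2 * k := by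
  refine natDegree_sum_le_of_forall_le _ _ fun i hi => ?_
  refine (natDegree_C_mul_le _ _).trans ?_
  rw [Chebyshev.natDegree_T]
  have := Finset.mem_range.1 hi
  omega

lemma auxU_deg (k : ℕ) (P : ℝ[X]) : (auxU k P).natDegree ≤ 2 * k - 1 := by
  refine natDegree_sum_le_of_forall_le _ _ fun i hi => ?_
  refine (natDegree_C_mul_le _ _).trans ?_
  rw [Chebyshev.natDegree_U]
  have := Finset.mem_range.1 hi
  omega

lemma aux_factor (β τ t : ℝ) (h0 : τ ≠ 0) (h : 2 * β = τ + τ⁻¹) :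
    1 + τ ^ 2 - 2 * τ * t = (-2 * τ) * (t - β) := by
  have : 2 * β * τ = τ ^ 2 + 1 := by rw [h]; field_simp
  linear_combination -this

lemma aux_basis (k : ℕ) (b : Fin k → ℝ) (hbI : ∀ i, b i ∉ Set.Icc (-1 : ℝ) 1)
    (τ : Fin k → ℝ) (hτ0 : ∀ i, τ i ≠ 0) (hτ : ∀ i, 2 * b i = τ i + (τ i)⁻¹) (i : Fin (1 + 2 * k)) :
    ∃ r : ℝ[X], r.natDegree ≤ 2 * k ∧
      ∀ t ∈ Set.Icc (-1 : ℝ) 1, r.eval t = auxD k τ t * fRat 1 k b i t := by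
  set L : Fin k → ℝ[X] := fun j => (Polynomial.C (-2 * τ j) * (X - Polynomial.C (b j))) ^ 2 with hL
  have hLe : ∀ j t, (L j).eval t = (1 + τ j ^ 2 - 2 * τ j * t) ^ 2 := by
    intro j t
    rw [aux_factor (b j) (τ j) t (hτ0 j) (hτ j)]; simp [hL]
  have hLd : ∀ j, (L j).natDegree ≤ 2 := by
    intro j
    simp only [hL]
    refine natDegree_pow_le.trans ?_
    have : (Polynomial.C (-2 * τ j) * (X - Polynomial.C (b j))).natDegree ≤ 1 :=
      (natDegree_C_mul_le _ _).trans (natDegree_X_sub_C_le _)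
    omega
  have hpd : ∀ S : Finset (Fin k), (∏ j ∈ S, L j).natDegree ≤ 2 * S.card := by
    intro S
    refine (natDegree_prod_le _ _).trans ?_
    refine (Finset.sum_le_card_nsmul _ _ 2 fun j _ => hLd j).trans ?_
    rw [smul_eq_mul, mul_comm]
  have hpe : ∀ (S : Finset (Fin k)) t, (∏ j ∈ S, L j).eval t = ∏ j ∈ S, (1 + τ j ^ 2 - 2 * τ j * t) ^ 2 := by
    intro S t; rw [eval_prod]; exact Finset.prod_congr rfl fun j _ => hLe j t
  by_cases hi : i.val < 1
  · refine ⟨∏ j, L j, by simpa using hpd univ, fun t _ => ?_⟩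
    have : i.val = 0 := by omega
    rw [hpe, auxD]
    simp [fRat, this]
  · obtain ⟨q, hq⟩ : ∃ q : Fin k, q = ⟨(i.val - 1) / 2, by have := i.isLt; omega⟩ := ⟨_, rfl⟩
    have hf : ∀ t, fRat 1 k b i t =
        if (i.val - 1) % 2 = 0 then (t - b q)⁻¹ else ((t - b q) ^ 2)⁻¹ := by
      intro t; simp only [fRat, hi, dif_neg, not_false_eq_true, hq]
    have hD : ∀ t, auxD k τ t = ((-2 * τ q) * (t - b q)) ^ 2 *
        ∏ j ∈ univ.erase q, (1 + τ j ^ 2 - 2 * τ j * t) ^ 2 := by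
      intro t
      rw [← aux_factor (b q) (τ q) t (hτ0 q) (hτ q), auxD,
        Finset.mul_prod_erase univ (fun j => (1 + τ j ^ 2 - 2 * τ j * t) ^ 2) (mem_univ q)]
    have hne : ∀ t ∈ Set.Icc (-1 : ℝ) 1, t - b q ≠ 0 := by
      intro t ht h
      exact hbI q (by rw [← sub_eq_zero.1 h]; exact ht)
    have hk : 2 * (univ.erase q : Finset (Fin k)).card + 2 ≤ 2 * k := by
      rw [Finset.card_erase_of_mem (mem_univ q), card_univ, Fintype.card_fin]
      have := q.isLt; omega
    by_cases hp : (i.val - 1) % 2 = 0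
    · refine ⟨(∏ j ∈ univ.erase q, L j) * (Polynomial.C ((-2 * τ q) ^ 2) * (X - Polynomial.C (b q))), ?_, ?_⟩
      · have h1 := hpd (univ.erase q)
        have h2 : (Polynomial.C ((-2 * τ q) ^ 2) * (X - Polynomial.C (b q))).natDegree ≤ 1 :=
          (natDegree_C_mul_le _ _).trans (natDegree_X_sub_C_le _)
        refine natDegree_mul_le.trans ?_
        omega
      · intro t ht
        have := hne t ht
        rw [eval_mul, hpe, hf, if_pos hp, hD]
        simp only [eval_mul, eval_C, eval_sub, eval_X]
        generalize (∏ j ∈ univ.erase q, (1 + τ j ^ 2 - 2 * τ j * t) ^ 2) = Z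
        field_simp
    · refine ⟨(∏ j ∈ univ.erase q, L j) * (Polynomial.C ((-2 * τ q) ^ 2)), ?_, ?_⟩
      · have h1 := hpd (univ.erase q)
        refine natDegree_mul_le.trans ?_
        rw [natDegree_C]
        omega
      · intro t ht
        have := hne t ht
        rw [eval_mul, hpe, hf, if_neg hp, hD]
        simp only [eval_C]
        generalize (∏ j ∈ univ.erase q, (1 + τ j ^ 2 - 2 * τ j * t) ^ 2) = Z
        field_simp

/-- for `s = 1` the Chebyshev points of the rational system on
`[−1,1]` are exactly the zeros in `[−1,1]` of
`(1−t²) Σ_{i=0}^{4k} dᵢ U_{i−2k−1}(t)`, where `Σ dᵢ tⁱ = ∏ (t−τᵢ)⁴` and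
`2bᵢ = τᵢ + 1/τᵢ` with `0 < |τᵢ| < 1`. `U` is the (ℤ-indexed) Chebyshev polynomial
of the second kind, satisfying `U₋₁ = 0` and `U₋ₙ = −U_{n−2}`. -/
theorem stmt13 (k : ℕ) (hk : 1 ≤ k)
    (b : Fin k → ℝ) (hbI : ∀ i, b i ∉ Set.Icc (-1 : ℝ) 1) (hb : Function.Injective b)
    (τ : Fin k → ℝ) (hτ0 : ∀ i, τ i ≠ 0) (hτ1 : ∀ i, |τ i| < 1)
    (hτ : ∀ i, 2 * b i = τ i + (τ i)⁻¹)
    (P : Polynomial ℝ) (hP : P = ∏ i : Fin k, (Polynomial.X - Polynomial.C (τ i)) ^ 4)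
    (G : ℝ → ℝ)
    (hG : G = fun t => (1 - t ^ 2) *
      ∑ i ∈ Finset.range (4 * k + 1),
        P.coeff i * (Polynomial.Chebyshev.U ℝ ((i : ℤ) - 2 * (k : ℤ) - 1)).eval t)
    (sv : Fin (1 + 2 * k) → ℝ) (hsv : StrictMono sv)
    (hsvI : ∀ i, sv i ∈ Set.Icc (-1 : ℝ) 1)
    (c : Fin (1 + 2 * k) → ℝ)
    (hbound : ∀ t ∈ Set.Icc (-1 : ℝ) 1, |∑ i, c i * fRat 1 k b i t| ≤ 1)
    (hosc : ∀ j : Fin (1 + 2 * k),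
      ∑ i, c i * fRat 1 k b i (sv j) = (-1 : ℝ) ^ (j.val + 1)) :
    {t : ℝ | t ∈ Set.Icc (-1 : ℝ) 1 ∧ G t = 0} = Set.range sv := by
  obtain ⟨s, hs, hsI, hsA⟩ := aux_points k τ hτ1 P hP
  choose r hrd hre using aux_basis k b hbI τ hτ0 hτ
  set R : ℝ[X] := ∑ i, Polynomial.C (c i) * r i with hR
  have hRd : R.natDegree ≤ 2 * k :=
    natDegree_sum_le_of_forall_le _ _ fun i _ => (natDegree_C_mul_le _ _).trans (hrd i)
  have hRe : ∀ t ∈ Set.Icc (-1 : ℝ) 1, R.eval t = auxD k τ t * ∑ i, c i * fRat 1 k b i t := by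
    intro t ht
    rw [hR, eval_finsetSum, Finset.mul_sum]
    refine Finset.sum_congr rfl fun i _ => ?_
    rw [eval_mul, eval_C, hre i t ht]; ring
  have hdlt : ∀ p : ℝ[X], p.natDegree ≤ 2 * k → p.degree < ((1 + 2 * k : ℕ) : WithBot ℕ) := by
    intro p hp
    refine degree_le_natDegree.trans_lt ?_
    exact_mod_cast (by omega : p.natDegree < 1 + 2 * k)
  have hDp := auxD_pos k τ hτ1
  have hAbd : ∀ t ∈ Set.Icc (-1 : ℝ) 1, |(auxA k P).eval t| ≤ auxD k τ t := by
    intro t ht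
    apply abs_le_of_sq_le_sq _ (hDp t ht).le
    have := aux_pell k τ P hP t ht
    have h2 : 0 ≤ (1 - t ^ 2) * (auxU k P).eval t ^ 2 :=
      mul_nonneg (by nlinarith [ht.1, ht.2]) (sq_nonneg _)
    linarith
  have hRbd : ∀ t ∈ Set.Icc (-1 : ℝ) 1, |R.eval t| ≤ auxD k τ t := by
    intro t ht
    rw [hRe t ht, abs_mul, abs_of_pos (hDp t ht)]
    exact mul_le_of_le_one_right (hDp t ht).le (hbound t ht)
  have key1 := aux_key (1 + 2 * k) s hs (auxD k τ) (auxA k P) R (hdlt _ (auxA_deg k P)) (hdlt _ hRd)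
    1 (by simp) (fun j => hDp _ (hsI j)) hsA (fun j => hRbd _ (hsI j))
  have key2 := aux_key (1 + 2 * k) sv hsv (auxD k τ) R (auxA k P) (hdlt _ hRd) (hdlt _ (auxA_deg k P))
    (-1) (by simp) (fun j => hDp _ (hsvI j))
    (fun j => by rw [hRe _ (hsvI j), hosc j]; ring) (fun j => hAbd _ (hsvI j))
  have hext := key2.2 key1.1
  set W : ℝ[X] := (1 - X ^ 2) * auxU k P with hW
  have hGW : ∀ t, G t = W.eval t := by
    intro t
    rw [hG, hW]
    simp [auxU, eval_finsetSum]
  have hzero : ∀ j, W.eval (sv j) = 0 := by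
    intro j
    have h1 := aux_pell k τ P hP _ (hsvI j)
    have h2 : (auxA k P).eval (sv j) ^ 2 = auxD k τ (sv j) ^ 2 := by rw [← hext j, sq_abs]
    have h3 : (1 - sv j ^ 2) * (auxU k P).eval (sv j) ^ 2 = 0 := by linarith
    rw [hW]
    simp only [eval_mul, eval_sub, eval_one, eval_pow, eval_X]
    rcases mul_eq_zero.1 h3 with h | h
    · rw [h, zero_mul]
    · rw [pow_eq_zero_iff two_ne_zero |>.1 h, mul_zero]
  have hU0 : auxU k P ≠ 0 := by
    intro h0
    have hne : ∀ t ∈ Set.Icc (-1 : ℝ) 1, (auxA k P).eval t ≠ 0 := by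
      intro t ht hz
      have := aux_pell k τ P hP t ht
      rw [hz, h0] at this
      have h2 := hDp t ht
      simp at this
      exact h2.ne' (by simpa using this.symm)
    have h0' := hsA ⟨0, by omega⟩
    have h1' := hsA ⟨1, by omega⟩
    have d0 := hDp _ (hsI ⟨0, by omega⟩)
    have d1 := hDp _ (hsI ⟨1, by omega⟩)
    have hlt : s ⟨0, by omega⟩ < s ⟨1, by omega⟩ := hs (by simp [Fin.lt_def])
    obtain ⟨t, ht, hz⟩ := intermediate_value_Icc' hlt.le (f := fun t => (auxA k P).eval t)
      (auxA k P).continuous.continuousOn (show (0 : ℝ) ∈ _ by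
        constructor
        · simp only [h1']; simp; exact d1.le
        · simp only [h0']; simp; exact d0.le)
    exact hne t ⟨(hsI _).1.trans ht.1, ht.2.trans (hsI _).2⟩ hz
  have hX : (1 - X ^ 2 : ℝ[X]) ≠ 0 := by
    intro h
    have := congrArg (Polynomial.eval 0) h
    simp at this
  have hW0 : W ≠ 0 := mul_ne_zero hX hU0
  have hWd : W.natDegree ≤ 2 * k + 1 := by
    have h1 : (1 - X ^ 2 : ℝ[X]).natDegree ≤ 2 := by compute_degree
    have h2 := auxU_deg k P
    refine natDegree_mul_le.trans ?_
    omega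
  have hsub : Finset.image sv univ ⊆ W.roots.toFinset := by
    intro t ht
    obtain ⟨j, -, rfl⟩ := Finset.mem_image.1 ht
    simp [hW0, hzero j]
  have hcard : W.roots.toFinset.card ≤ (Finset.image sv univ).card := by
    rw [Finset.card_image_of_injective _ hsv.injective, card_univ, Fintype.card_fin]
    have := (Multiset.toFinset_card_le W.roots).trans (card_roots' W)
    omega
  have heq := Finset.eq_of_subset_of_card_le hsub hcard
  ext t
  constructor
  · rintro ⟨_, hGt⟩
    have : t ∈ W.roots.toFinset := by
      rw [hGW] at hGt
      simp [hW0, hGt]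
    rw [← heq] at this
    obtain ⟨j, -, rfl⟩ := Finset.mem_image.1 this
    exact ⟨j, rfl⟩
  · rintro ⟨j, rfl⟩
    exact ⟨hsvI j, by rw [hGW, hzero j]⟩
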